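/- A PEUF p-formula F is universally valid if and only if F is true under every maximally diverse interpretation (over every nonempty domain). -/

import Mathlib

mutual
inductive EufTerm (Fn Pr : Type) : Type
  | app : Fn → List (EufTerm Fn Pr) → EufTerm Fn Pr
  | ite : EufFormula Fn Pr → EufTerm Fn Pr → EufTerm Fn Pr → EufTerm Fn Pr
inductive EufFormula (Fn Pr : Type) : Type
  | tt : EufFormula Fn Pr
  | ff : EufFormula Fn Pr
  | not : EufFormula Fn Pr → EufFormula Fn Pr
  | and : EufFormula Fn Pr → EufFormula Fn Pr → EufFormula Fn Pr
  | or : EufFormula Fn Pr → EufFormula Fn Pr → EufFormula Fn Pr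
  | eq : EufTerm Fn Pr → EufTerm Fn Pr → EufFormula Fn Pr
  | papp : Pr → List (EufTerm Fn Pr) → EufFormula Fn Pr
end

structure Interp (Fn Pr : Type) (D : Type u) where
  fn : Fn → List D → D
  pr : Pr → List D → Bool

open Classical in
mutual
noncomputable def evalT {Fn Pr : Type} {D : Type} (I : Interp Fn Pr D) : EufTerm Fn Pr → D
  | .app f args => I.fn f (args.attach.map (fun t => evalT I t.1))
  | .ite G T1 T2 => if evalF I G then evalT I T1 else evalT I T2
termination_by t => sizeOf t
decreasing_by
  all_goals simp_wf
  all_goals try omega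
  all_goals (have := List.sizeOf_lt_of_mem t.2; omega)
noncomputable def evalF {Fn Pr : Type} {D : Type} (I : Interp Fn Pr D) : EufFormula Fn Pr → Bool
  | .tt => true
  | .ff => false
  | .not G => !evalF I G
  | .and G1 G2 => evalF I G1 && evalF I G2
  | .or G1 G2 => evalF I G1 || evalF I G2
  | .eq T1 T2 => decide (evalT I T1 = evalT I T2)
  | .papp p args => I.pr p (args.attach.map (fun t => evalT I t.1))
termination_by g => sizeOf g
decreasing_by
  all_goals simp_wf
  all_goals try omega
  all_goals (have := List.sizeOf_lt_of_mem t.2; omega)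
end
def ValidOn {Fn Pr : Type} (F : EufFormula Fn Pr) (D : Type) : Prop :=
  ∀ I : Interp Fn Pr D, evalF I F = true

def UniversallyValid {Fn Pr : Type} (F : EufFormula Fn Pr) : Prop :=
  ∀ D : Type, Nonempty D → ValidOn F D

/-- Expressions: terms or formulas. -/
inductive EufExpr (Fn Pr : Type) : Type
  | t : EufTerm Fn Pr → EufExpr Fn Pr
  | f : EufFormula Fn Pr → EufExpr Fn Pr

/-- Immediate (proper) subexpression relation. -/
inductive ImmSub {Fn Pr : Type} : EufExpr Fn Pr → EufExpr Fn Pr → Prop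
  | appArg {g : Fn} {args : List (EufTerm Fn Pr)} {T : EufTerm Fn Pr} :
      T ∈ args → ImmSub (.t T) (.t (.app g args))
  | iteC {G : EufFormula Fn Pr} {T1 T2 : EufTerm Fn Pr} : ImmSub (.f G) (.t (.ite G T1 T2))
  | ite1 {G : EufFormula Fn Pr} {T1 T2 : EufTerm Fn Pr} : ImmSub (.t T1) (.t (.ite G T1 T2))
  | ite2 {G : EufFormula Fn Pr} {T1 T2 : EufTerm Fn Pr} : ImmSub (.t T2) (.t (.ite G T1 T2))
  | not {G : EufFormula Fn Pr} : ImmSub (.f G) (.f (.not G))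
  | andL {G1 G2 : EufFormula Fn Pr} : ImmSub (.f G1) (.f (.and G1 G2))
  | andR {G1 G2 : EufFormula Fn Pr} : ImmSub (.f G2) (.f (.and G1 G2))
  | orL {G1 G2 : EufFormula Fn Pr} : ImmSub (.f G1) (.f (.or G1 G2))
  | orR {G1 G2 : EufFormula Fn Pr} : ImmSub (.f G2) (.f (.or G1 G2))
  | eqL {T1 T2 : EufTerm Fn Pr} : ImmSub (.t T1) (.f (.eq T1 T2))
  | eqR {T1 T2 : EufTerm Fn Pr} : ImmSub (.t T2) (.f (.eq T1 T2))
  | pappArg {p : Pr} {args : List (EufTerm Fn Pr)} {T : EufTerm Fn Pr} :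
      T ∈ args → ImmSub (.t T) (.f (.papp p args))

/-- `SubExpr a b`: `a` occurs (as a subexpression) in `b`. -/
def SubExpr {Fn Pr : Type} (a b : EufExpr Fn Pr) : Prop := Relation.ReflTransGen ImmSub a b

def TermInT {Fn Pr : Type} (T S : EufTerm Fn Pr) : Prop := SubExpr (.t T) (.t S)
def TermInF {Fn Pr : Type} (T : EufTerm Fn Pr) (F : EufFormula Fn Pr) : Prop :=
  SubExpr (.t T) (.f F)
def FormulaInT {Fn Pr : Type} (G : EufFormula Fn Pr) (S : EufTerm Fn Pr) : Prop :=
  SubExpr (.f G) (.t S)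
def FormulaInF {Fn Pr : Type} (G F : EufFormula Fn Pr) : Prop := SubExpr (.f G) (.f F)

def IsAppTerm {Fn Pr : Type} : EufTerm Fn Pr → Prop
  | .app _ _ => True
  | _ => False

/-- `𝒯(F)`: the function application terms occurring in `F`. -/
def AppTermsF {Fn Pr : Type} (F : EufFormula Fn Pr) : Set (EufTerm Fn Pr) :=
  {T | IsAppTerm T ∧ TermInF T F}

/-- A function symbol occurs in `F` when some application of it occurs in `F`. -/
def FnInF {Fn Pr : Type} (g : Fn) (F : EufFormula Fn Pr) : Prop :=
  ∃ args, TermInF (EufTerm.app g args) F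

def PrInF {Fn Pr : Type} (p : Pr) (F : EufFormula Fn Pr) : Prop :=
  ∃ args, FormulaInF (EufFormula.papp p args) F

/-- `I` is diverse for `F` with respect to the set `Sg` of function symbols. -/
def DiverseFor {Fn Pr D : Type} (I : Interp Fn Pr D) (F : EufFormula Fn Pr)
    (Sg : Set Fn) : Prop :=
  ∀ (g : Fn) (args : List (EufTerm Fn Pr)), g ∈ Sg →
    TermInF (EufTerm.app g args) F →
    ∀ T2 ∈ AppTermsF F, evalT I (EufTerm.app g args) = evalT I T2 →
      ∃ args2, T2 = EufTerm.app g args2 ∧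
        List.Forall₂ (fun a b => evalT I a = evalT I b) args args2

mutual
/-- PEUF g-terms, where `isP` designates the p-function symbols. -/
inductive IsGTerm {Fn Pr : Type} (isP : Fn → Prop) : EufTerm Fn Pr → Prop
  | ite {G : EufFormula Fn Pr} {T1 T2 : EufTerm Fn Pr} :
      IsGFormula isP G → IsGTerm isP T1 → IsGTerm isP T2 → IsGTerm isP (.ite G T1 T2)
  | app {g : Fn} {args : List (EufTerm Fn Pr)} :
      ¬ isP g → (∀ T ∈ args, IsPTerm isP T) → IsGTerm isP (.app g args)
/-- PEUF p-terms. -/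
inductive IsPTerm {Fn Pr : Type} (isP : Fn → Prop) : EufTerm Fn Pr → Prop
  | g {T : EufTerm Fn Pr} : IsGTerm isP T → IsPTerm isP T
  | ite {G : EufFormula Fn Pr} {T1 T2 : EufTerm Fn Pr} :
      IsGFormula isP G → IsPTerm isP T1 → IsPTerm isP T2 → IsPTerm isP (.ite G T1 T2)
  | app {g : Fn} {args : List (EufTerm Fn Pr)} :
      isP g → (∀ T ∈ args, IsPTerm isP T) → IsPTerm isP (.app g args)
/-- PEUF g-formulas. -/
inductive IsGFormula {Fn Pr : Type} (isP : Fn → Prop) : EufFormula Fn Pr → Prop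
  | tt : IsGFormula isP .tt
  | ff : IsGFormula isP .ff
  | not {G : EufFormula Fn Pr} : IsGFormula isP G → IsGFormula isP (.not G)
  | and {G1 G2 : EufFormula Fn Pr} :
      IsGFormula isP G1 → IsGFormula isP G2 → IsGFormula isP (.and G1 G2)
  | or {G1 G2 : EufFormula Fn Pr} :
      IsGFormula isP G1 → IsGFormula isP G2 → IsGFormula isP (.or G1 G2)
  | eq {T1 T2 : EufTerm Fn Pr} :
      IsGTerm isP T1 → IsGTerm isP T2 → IsGFormula isP (.eq T1 T2)
  | papp {p : Pr} {args : List (EufTerm Fn Pr)} :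
      (∀ T ∈ args, IsPTerm isP T) → IsGFormula isP (.papp p args)
/-- PEUF p-formulas. -/
inductive IsPFormula {Fn Pr : Type} (isP : Fn → Prop) : EufFormula Fn Pr → Prop
  | g {G : EufFormula Fn Pr} : IsGFormula isP G → IsPFormula isP G
  | and {G1 G2 : EufFormula Fn Pr} :
      IsPFormula isP G1 → IsPFormula isP G2 → IsPFormula isP (.and G1 G2)
  | or {G1 G2 : EufFormula Fn Pr} :
      IsPFormula isP G1 → IsPFormula isP G2 → IsPFormula isP (.or G1 G2)
  | eq {T1 T2 : EufTerm Fn Pr} :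
      IsPTerm isP T1 → IsPTerm isP T2 → IsPFormula isP (.eq T1 T2)
end

/-- The p-function symbols occurring in `F`. -/
def PSymbolsIn {Fn Pr : Type} (isP : Fn → Prop) (F : EufFormula Fn Pr) : Set Fn :=
  {g | isP g ∧ FnInF g F}

/-- `I` is maximally diverse for the p-formula `F`. -/
def MaxDiverse {Fn Pr D : Type} (isP : Fn → Prop) (I : Interp Fn Pr D)
    (F : EufFormula Fn Pr) : Prop :=
  DiverseFor I F (PSymbolsIn isP F)

/-- `I'` refines `I` on the term set `Ts`. -/
def RefinesOn {Fn Pr D D' : Type} (I' : Interp Fn Pr D') (I : Interp Fn Pr D)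
    (Ts : Set (EufTerm Fn Pr)) : Prop :=
  ∀ T1 ∈ Ts, ∀ T2 ∈ Ts, evalT I' T1 = evalT I' T2 → evalT I T1 = evalT I T2

def ProperRefinesOn {Fn Pr D D' : Type} (I' : Interp Fn Pr D') (I : Interp Fn Pr D)
    (Ts : Set (EufTerm Fn Pr)) : Prop :=
  RefinesOn I' I Ts ∧
    ∃ T1 ∈ Ts, ∃ T2 ∈ Ts, evalT I T1 = evalT I T2 ∧ evalT I' T1 ≠ evalT I' T2

inductive DivDom (Fn D : Type) : Type
  | g : D → DivDom Fn D
  | p : D → Fn → List (DivDom Fn D) → DivDom Fn D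

def DivDom.val {Fn D : Type} : DivDom Fn D → D
  | .g d => d
  | .p d _ _ => d

open Classical in
noncomputable def divInterp {Fn Pr D : Type} (isP : Fn → Prop) (I : Interp Fn Pr D) :
    Interp Fn Pr (DivDom Fn D) where
  fn f args := if isP f then .p (I.fn f (args.map DivDom.val)) f args
    else .g (I.fn f (args.map DivDom.val))
  pr q args := I.pr q (args.map DivDom.val)

theorem evalT_app' {Fn Pr D : Type} (I : Interp Fn Pr D) (f : Fn)
    (args : List (EufTerm Fn Pr)) :
    evalT I (.app f args) = I.fn f (args.map (evalT I)) := by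
  rw [evalT]; simp

theorem evalF_papp' {Fn Pr D : Type} (I : Interp Fn Pr D) (f : Pr)
    (args : List (EufTerm Fn Pr)) :
    evalF I (.papp f args) = I.pr f (args.map (evalT I)) := by
  rw [evalF]; simp

theorem map_val_eq {Fn Pr D : Type} (isP : Fn → Prop) (I : Interp Fn Pr D)
    (args : List (EufTerm Fn Pr))
    (h : ∀ T ∈ args, (evalT (divInterp isP I) T).val = evalT I T) :
    (args.map (evalT (divInterp isP I))).map DivDom.val = args.map (evalT I) := by
  rw [List.map_map]
  exact List.map_congr_left h

mutual
theorem gterm_eval {Fn Pr D : Type} {isP : Fn → Prop} (I : Interp Fn Pr D)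
    {T : EufTerm Fn Pr} : IsGTerm isP T →
    evalT (divInterp isP I) T = .g (evalT I T)
  | .ite hG h1 h2 => by
    have a := gformula_eval I hG
    have b := gterm_eval I h1
    have c := gterm_eval I h2
    rw [evalT, evalT, a, b, c]
    split <;> rfl
  | .app hg hargs => by
    have a := map_val_eq isP I _ (fun T hT => pterm_eval I (hargs T hT))
    rw [evalT_app', evalT_app', ← a]
    simp [divInterp, hg]
theorem pterm_eval {Fn Pr D : Type} {isP : Fn → Prop} (I : Interp Fn Pr D)
    {T : EufTerm Fn Pr} : IsPTerm isP T →
    (evalT (divInterp isP I) T).val = evalT I T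
  | .g h => by rw [gterm_eval I h]; rfl
  | .ite hG h1 h2 => by
    have a := gformula_eval I hG
    have b := pterm_eval I h1
    have c := pterm_eval I h2
    rw [evalT, evalT, a, ← b, ← c]
    split <;> rfl
  | .app hg hargs => by
    have a := map_val_eq isP I _ (fun T hT => pterm_eval I (hargs T hT))
    rw [evalT_app', evalT_app', ← a]
    simp [divInterp, hg, DivDom.val]
theorem gformula_eval {Fn Pr D : Type} {isP : Fn → Prop} (I : Interp Fn Pr D)
    {G : EufFormula Fn Pr} : IsGFormula isP G →
    evalF (divInterp isP I) G = evalF I G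
  | .tt => by rw [evalF, evalF]
  | .ff => by rw [evalF, evalF]
  | .not h => by rw [evalF, evalF, gformula_eval I h]
  | .and h1 h2 => by rw [evalF, evalF, gformula_eval I h1, gformula_eval I h2]
  | .or h1 h2 => by rw [evalF, evalF, gformula_eval I h1, gformula_eval I h2]
  | .eq h1 h2 => by
    have a := gterm_eval I h1
    have b := gterm_eval I h2
    rw [evalF, evalF, a, b]
    simp
  | .papp hargs => by
    have a := map_val_eq isP I _ (fun T hT => pterm_eval I (hargs T hT))
    rw [evalF_papp', evalF_papp', ← a]
    rfl
end

theorem pformula_eval {Fn Pr D : Type} {isP : Fn → Prop} (I : Interp Fn Pr D)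
    {G : EufFormula Fn Pr} : IsPFormula isP G →
    evalF (divInterp isP I) G = true → evalF I G = true
  | .g h => by rw [gformula_eval I h]; exact id
  | .and h1 h2 => by
    have a := pformula_eval I h1
    have b := pformula_eval I h2
    rw [evalF, evalF, Bool.and_eq_true, Bool.and_eq_true]
    exact fun h => ⟨a h.1, b h.2⟩
  | .or h1 h2 => by
    have a := pformula_eval I h1
    have b := pformula_eval I h2
    rw [evalF, evalF, Bool.or_eq_true, Bool.or_eq_true]
    exact Or.imp a b
  | .eq h1 h2 => by
    have a := pterm_eval I h1
    have b := pterm_eval I h2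
    rw [evalF, evalF, ← a, ← b]
    simp only [decide_eq_true_eq]
    exact fun h => congrArg _ h

theorem divInterp_diverse {Fn Pr D : Type} (isP : Fn → Prop) (I : Interp Fn Pr D)
    (F : EufFormula Fn Pr) : MaxDiverse isP (divInterp isP I) F := by
  intro g args hg _ T2 hT2 heq
  cases T2 with
  | ite G T1 T2 => exact hT2.1.elim
  | app f args2 =>
    have hp : isP g := hg.1
    rw [evalT_app', evalT_app'] at heq
    by_cases hf : isP f
    · simp only [divInterp, hp, hf, if_true, DivDom.p.injEq] at heq
      obtain ⟨_, rfl, h⟩ := heq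
      refine ⟨args2, rfl, ?_⟩
      have h' : List.Forall₂ (· = ·) (args.map (evalT (divInterp isP I)))
        (args2.map (evalT (divInterp isP I))) := List.forall₂_eq_eq_eq ▸ h
      simpa [List.forall₂_map_left_iff, List.forall₂_map_right_iff] using h'
    · simp [divInterp, hp, hf] at heq

/-- A PEUF p-formula is universally valid iff it is true under every
maximally diverse interpretation over every nonempty domain. -/
theorem diverse_theorem {Fn Pr : Type} (isP : Fn → Prop) (F : EufFormula Fn Pr)
    (hF : IsPFormula isP F) :
    UniversallyValid F ↔
      ∀ (D : Type), Nonempty D → ∀ I : Interp Fn Pr D,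
        MaxDiverse isP I F → evalF I F = true := by
  constructor
  · intro h D hD I _
    exact h D hD I
  · intro h D hD I
    exact pformula_eval I hF
      (h _ (hD.map DivDom.g) (divInterp isP I) (divInterp_diverse isP I F))
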